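/- Let ρ_ABC be a positive definite density matrix (positive definite with trace 1) on the tensor product of finite-dimensional complex Hilbert spaces H_A ⊗ H_B ⊗ H_C. Then for every α ∈ (1,2), Tr{ ( ρ_AC^{(1−α)/2} ρ_C^{(α−1)/2} ρ_BC^{1−α} ρ_C^{(α−1)/2} ρ_AC^{(1−α)/2} )^{1/(1−α)} } ≤ 1. -/

import Mathlib

open scoped ComplexOrder Matrix

/-- Real power of a Hermitian matrix, taken on its support:
for `A = ∑ᵢ λᵢ |i⟩⟨i|`, `mpow A t = ∑_{i : λᵢ ≠ 0} λᵢ^t |i⟩⟨i|`.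
(For non-Hermitian input we return the junk value `0`.) -/
noncomputable def mpow {n : Type*} [Fintype n] [DecidableEq n]
    (A : Matrix n n ℂ) (t : ℝ) : Matrix n n ℂ :=
  if h : A.IsHermitian then
    (h.eigenvectorUnitary : Matrix n n ℂ) *
      Matrix.diagonal (fun i => ((if h.eigenvalues i = 0 then (0:ℝ)
        else (h.eigenvalues i) ^ t) : ℂ)) *
      (star h.eigenvectorUnitary : Matrix n n ℂ)
  else 0

/-- The reduced matrix `ρ_AC` of a tripartite matrix, viewed as the operator
`ρ_AC ⊗ I_B` on the full space. -/
noncomputable def redAC {dA dB dC : ℕ}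
    (ρ : Matrix (Fin dA × Fin dB × Fin dC) (Fin dA × Fin dB × Fin dC) ℂ) :
    Matrix (Fin dA × Fin dB × Fin dC) (Fin dA × Fin dB × Fin dC) ℂ :=
  fun x y => (if x.2.1 = y.2.1 then (1:ℂ) else 0) *
    ∑ m : Fin dB, ρ (x.1, m, x.2.2) (y.1, m, y.2.2)

/-- The reduced matrix `ρ_BC` of a tripartite matrix, viewed as the operator
`I_A ⊗ ρ_BC` on the full space. -/
noncomputable def redBC {dA dB dC : ℕ}
    (ρ : Matrix (Fin dA × Fin dB × Fin dC) (Fin dA × Fin dB × Fin dC) ℂ) :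
    Matrix (Fin dA × Fin dB × Fin dC) (Fin dA × Fin dB × Fin dC) ℂ :=
  fun x y => (if x.1 = y.1 then (1:ℂ) else 0) * ∑ m : Fin dA, ρ (m, x.2) (m, y.2)

/-- The reduced matrix `ρ_C` of a tripartite matrix, viewed as the operator
`I_A ⊗ I_B ⊗ ρ_C` on the full space. -/
noncomputable def redC {dA dB dC : ℕ}
    (ρ : Matrix (Fin dA × Fin dB × Fin dC) (Fin dA × Fin dB × Fin dC) ℂ) :
    Matrix (Fin dA × Fin dB × Fin dC) (Fin dA × Fin dB × Fin dC) ℂ :=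
  fun x y => (if x.1 = y.1 then (1:ℂ) else 0) * (if x.2.1 = y.2.1 then (1:ℂ) else 0) *
    ∑ m : Fin dA, ∑ l : Fin dB, ρ (m, l, x.2.2) (m, l, y.2.2)

open Matrix in
/-- complex power of a (positive definite) Hermitian matrix -/
noncomputable def pw {n : Type*} [Fintype n] [DecidableEq n] {A : Matrix n n ℂ}
    (h : A.IsHermitian) (z : ℂ) : Matrix n n ℂ :=
  (h.eigenvectorUnitary : Matrix n n ℂ) *
    Matrix.diagonal (fun i => Complex.exp (z * (Real.log (h.eigenvalues i) : ℝ))) *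
    (h.eigenvectorUnitary : Matrix n n ℂ)ᴴ

section pwlemmas
set_option linter.unusedSectionVars false
variable {n : Type*} [Fintype n] [DecidableEq n] {A : Matrix n n ℂ}

lemma pw_UU (h : A.IsHermitian) : (h.eigenvectorUnitary : Matrix n n ℂ)ᴴ *
    (h.eigenvectorUnitary : Matrix n n ℂ) = 1 :=
  (Matrix.mem_unitaryGroup_iff').1 h.eigenvectorUnitary.2

lemma pw_UU' (h : A.IsHermitian) : (h.eigenvectorUnitary : Matrix n n ℂ) *
    (h.eigenvectorUnitary : Matrix n n ℂ)ᴴ = 1 :=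
  (Matrix.mem_unitaryGroup_iff).1 h.eigenvectorUnitary.2

lemma pw_zero (h : A.IsHermitian) : pw h 0 = 1 := by
  simp [pw, pw_UU']

lemma pw_add (h : A.IsHermitian) (z w : ℂ) : pw h (z + w) = pw h z * pw h w := by
  have : pw h z * pw h w = (h.eigenvectorUnitary : Matrix n n ℂ) *
    (Matrix.diagonal (fun i => Complex.exp (z * (Real.log (h.eigenvalues i) : ℝ))) *
     ((h.eigenvectorUnitary : Matrix n n ℂ)ᴴ * (h.eigenvectorUnitary : Matrix n n ℂ)) *
     Matrix.diagonal (fun i => Complex.exp (w * (Real.log (h.eigenvalues i) : ℝ)))) *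
    (h.eigenvectorUnitary : Matrix n n ℂ)ᴴ := by
    simp only [pw, Matrix.mul_assoc]
  rw [this, pw_UU, Matrix.mul_one, Matrix.diagonal_mul_diagonal]
  simp only [pw, add_mul, Complex.exp_add]

lemma pw_star (h : A.IsHermitian) (z : ℂ) : (pw h z)ᴴ = pw h (star z) := by
  simp only [pw, Matrix.conjTranspose_mul, Matrix.conjTranspose_conjTranspose,
    Matrix.diagonal_conjTranspose, Matrix.mul_assoc]
  congr 3
  ext i
  simp [← Complex.exp_conj]

lemma spec (h : A.IsHermitian) : A = (h.eigenvectorUnitary : Matrix n n ℂ) *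
    Matrix.diagonal (fun i => ((h.eigenvalues i : ℝ) : ℂ)) *
    (h.eigenvectorUnitary : Matrix n n ℂ)ᴴ := by
  conv_lhs => rw [h.spectral_theorem, Unitary.conjStarAlgAut_apply]
  rfl

lemma pw_one (h : A.PosDef) : pw h.1 1 = A := by
  conv_rhs => rw [spec h.1]
  unfold pw
  congr 3
  ext i
  rw [one_mul, ← Complex.ofReal_exp, Real.exp_log (h.eigenvalues_pos i)]

lemma cfc_rpow_pos (x : ℝ) (hx : 0 < x) (t : ℝ) :
    (x : ℂ) ^ t = Complex.exp (t * (Real.log x : ℝ)) := by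
  have h := CFC.rpow_algebraMap (A := ℂ) (x := ⟨x, hx.le⟩) (y := t)
  have h2 : (x : ℂ) ^ t = ((x ^ t : ℝ) : ℂ) := h
  rw [h2, Real.rpow_def_of_pos hx, mul_comm]
  push_cast
  rfl

lemma pw_mpow (h : A.PosDef) (t : ℝ) : mpow A t = pw h.1 t := by
  unfold mpow pw
  rw [dif_pos h.1]
  congr 3
  ext i
  have := h.eigenvalues_pos i
  rw [if_neg this.ne']
  exact cfc_rpow_pos _ this t

lemma pw_trace (h : A.IsHermitian) (t : ℝ) : (pw h t).trace =
    ((∑ i, Real.exp (t * Real.log (h.eigenvalues i)) : ℝ) : ℂ) := by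
  unfold pw
  rw [Matrix.trace_mul_comm, ← Matrix.mul_assoc, pw_UU, Matrix.one_mul, Matrix.trace_diagonal]
  push_cast
  rfl

lemma pw_comm (h : A.PosDef) (z : ℂ) (X : Matrix n n ℂ) (hX : A * X = X * A) :
    pw h.1 z * X = X * pw h.1 z := by
  set U := (h.1.eigenvectorUnitary : Matrix n n ℂ) with hU
  have h1 := pw_UU h.1
  have h2 := pw_UU' h.1
  rw [← hU] at h1 h2
  set D := Matrix.diagonal (fun i => ((h.1.eigenvalues i : ℝ) : ℂ)) with hD
  set E := Matrix.diagonal (fun i => Complex.exp (z * (Real.log (h.1.eigenvalues i) : ℝ))) with hE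
  have hA : A = U * D * Uᴴ := spec h.1
  have hP : pw h.1 z = U * E * Uᴴ := rfl
  have key : D * (Uᴴ * X * U) = (Uᴴ * X * U) * D := by
    have : Uᴴ * (A * X) * U = Uᴴ * (X * A) * U := by rw [hX]
    rw [hA] at this
    calc D * (Uᴴ * X * U) = (Uᴴ * U) * D * (Uᴴ * X * U) := by rw [h1, Matrix.one_mul]
      _ = Uᴴ * (U * D * Uᴴ * X) * U := by simp only [Matrix.mul_assoc]
      _ = Uᴴ * (X * (U * D * Uᴴ)) * U := this
      _ = (Uᴴ * X * U) * D * (Uᴴ * U) := by simp only [Matrix.mul_assoc]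
      _ = _ := by rw [h1, Matrix.mul_one]
  have key2 : E * (Uᴴ * X * U) = (Uᴴ * X * U) * E := by
    ext i j
    have := congrFun (congrFun key i) j
    rw [hD, Matrix.diagonal_mul, Matrix.mul_diagonal] at this
    rw [hE, Matrix.diagonal_mul, Matrix.mul_diagonal]
    by_cases h0 : (Uᴴ * X * U) i j = 0
    · rw [h0]; simp
    · rw [mul_comm] at this
      have := mul_left_cancel₀ h0 this
      rw [Complex.ofReal_inj.1 this, mul_comm]
  rw [hP]
  calc U * E * Uᴴ * X = U * E * Uᴴ * X * (U * Uᴴ) := by rw [h2, Matrix.mul_one]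
    _ = U * (E * (Uᴴ * X * U)) * Uᴴ := by simp only [Matrix.mul_assoc]
    _ = U * ((Uᴴ * X * U) * E) * Uᴴ := by rw [key2]
    _ = (U * Uᴴ) * X * (U * E * Uᴴ) := by simp only [Matrix.mul_assoc]
    _ = _ := by rw [h2, Matrix.one_mul]

/-- entire functions bounded on the strip -/
def Good (f : ℂ → ℂ) : Prop := Differentiable ℂ f ∧
  ∃ C : ℝ, ∀ z : ℂ, 0 ≤ z.re → z.re ≤ 1 → ‖f z‖ ≤ C

lemma Good.const (c : ℂ) : Good (fun _ => c) :=
  ⟨differentiable_const _, ‖c‖, fun _ _ _ => le_rfl⟩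

lemma Good.mul {f g : ℂ → ℂ} (hf : Good f) (hg : Good g) : Good (fun z => f z * g z) := by
  obtain ⟨hf, C, hC⟩ := hf
  obtain ⟨hg, D, hD⟩ := hg
  refine ⟨hf.mul hg, C * D, fun z h0 h1 => ?_⟩
  rw [norm_mul]
  exact mul_le_mul (hC z h0 h1) (hD z h0 h1) (norm_nonneg _) ((norm_nonneg _).trans (hC z h0 h1))

lemma Good.sum {ι : Type*} (s : Finset ι) {f : ι → ℂ → ℂ} (hf : ∀ i, Good (f i)) :
    Good (fun z => ∑ i ∈ s, f i z) := by
  choose hd C hC using hf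
  refine ⟨?_, ∑ i ∈ s, C i, fun z h0 h1 => ?_⟩
  · exact Differentiable.fun_sum fun i _ => hd i
  · exact (norm_sum_le _ _).trans (Finset.sum_le_sum fun i _ => hC i z h0 h1)

lemma Good.exp (a b : ℂ) : Good (fun z => Complex.exp (a + z * (b.re : ℂ))) := by
  refine ⟨by fun_prop, Real.exp (a.re + |b.re|), fun z h0 h1 => ?_⟩
  rw [Complex.norm_exp]
  apply Real.exp_le_exp.2
  simp only [Complex.add_re, Complex.mul_re, Complex.ofReal_re, Complex.ofReal_im, mul_zero,
    sub_zero]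
  have : z.re * b.re ≤ |b.re| := by
    calc z.re * b.re ≤ z.re * |b.re| := mul_le_mul_of_nonneg_left (le_abs_self _) h0
      _ ≤ 1 * |b.re| := mul_le_mul_of_nonneg_right h1 (abs_nonneg _)
      _ = _ := one_mul _
  linarith

/-- matrix version -/
def GoodM (F : ℂ → Matrix n n ℂ) : Prop := ∀ i j, Good (fun z => F z i j)

lemma GoodM.const (M : Matrix n n ℂ) : GoodM (fun _ => M) := fun _ _ => Good.const _

lemma GoodM.mul {F G : ℂ → Matrix n n ℂ} (hF : GoodM F) (hG : GoodM G) :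
    GoodM (fun z => F z * G z) := by
  intro i j
  simp only [Matrix.mul_apply]
  exact Good.sum _ fun k => (hF i k).mul (hG k j)

lemma GoodM.pw (h : A.IsHermitian) (a b : ℝ) : GoodM (fun z => pw h (a + z * b)) := by
  unfold _root_.pw
  refine GoodM.mul (GoodM.mul (GoodM.const _) ?_) (GoodM.const _)
  intro i j
  by_cases hij : i = j
  · subst hij
    simp only [Matrix.diagonal_apply_eq]
    convert! Good.exp ((a * Real.log (h.eigenvalues i) : ℝ) : ℂ)
      ((b * Real.log (h.eigenvalues i) : ℝ) : ℂ) using 3 with z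
    simp only [Complex.ofReal_re]
    push_cast
    ring
  · simp only [Matrix.diagonal_apply_ne _ hij]
    exact Good.const _

lemma Good.trace {F : ℂ → Matrix n n ℂ} (hF : GoodM F) : Good (fun z => (F z).trace) := by
  simp only [Matrix.trace]
  exact Good.sum _ fun i => hF i i

lemma hs_cs (P Q : Matrix n n ℂ) (p q : ℝ) (hp : (Pᴴ * P).trace = p) (hq : (Qᴴ * Q).trace = q) :
    ‖(P * Q).trace‖ ≤ √p * √q := by
  have aux : ∀ R : Matrix n n ℂ, (Rᴴ * R).trace = ((∑ x : n × n, ‖R x.2 x.1‖ ^ 2 : ℝ) : ℂ) := by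
    intro R
    rw [Fintype.sum_prod_type]
    simp only [Matrix.trace, Matrix.diag, Matrix.mul_apply, Matrix.conjTranspose_apply]
    push_cast
    refine Finset.sum_congr rfl fun i _ => Finset.sum_congr rfl fun j _ => ?_
    exact Complex.conj_mul' _
  have hp' : p = ∑ x : n × n, ‖P x.2 x.1‖ ^ 2 := by
    rw [aux] at hp; exact (Complex.ofReal_inj.1 hp).symm
  have hq' : q = ∑ x : n × n, ‖Q x.1 x.2‖ ^ 2 := by
    rw [aux] at hq; rw [← Complex.ofReal_inj.1 hq, ← (Equiv.prodComm n n).sum_comp]; rfl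
  have h1 : (P * Q).trace = ∑ x : n × n, P x.2 x.1 * Q x.1 x.2 := by
    rw [Fintype.sum_prod_type_right]
    simp only [Matrix.trace, Matrix.diag, Matrix.mul_apply]
  rw [h1, hp', hq']
  refine (norm_sum_le _ _).trans ?_
  simp only [norm_mul]
  exact Real.sum_mul_le_sqrt_mul_sqrt _ _ _

lemma pw_cancel (h : A.IsHermitian) (z w : ℂ) (hz : z + w = 0) : pw h z * pw h w = 1 := by
  rw [← pw_add, hz, pw_zero]

lemma main_interp {B C X Y : Matrix n n ℂ} (hA : A.PosDef) (hB : B.PosDef) (hC : C.PosDef)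
    (hX : X.PosDef) (s : ℝ) (hs0 : 0 < s) (hs1 : s < 1)
    (hY : Y = pw hA.1 (s / 2 : ℝ) * pw hC.1 (-s / 2 : ℝ) * pw hB.1 (s / 2 : ℝ))
    (hXY : Y * Yᴴ * X = 1)
    (H : ∀ z : ℂ, z + star z = 1 →
      (A * (pw hC.1 (-z) * B * pw hC.1 (-star z))).trace = 1) :
    (pw hX.1 (-1 / s : ℝ)).trace ≤ 1 := by
  set T : ℝ := ∑ i, Real.exp ((-1 / s) * Real.log (hX.1.eigenvalues i)) with hT
  have htr : (pw hX.1 (-1 / s : ℝ)).trace = (T : ℂ) := pw_trace hX.1 _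
  have hT0 : 0 ≤ T := Finset.sum_nonneg fun i _ => (Real.exp_pos _).le
  have hsC : (s : ℂ) ≠ 0 := by exact_mod_cast hs0.ne'
  set V : Matrix n n ℂ := Yᴴ * pw hX.1 (1 / 2) with hV
  have hYY : Y * Yᴴ = pw hX.1 (-1) := by
    have : Y * Yᴴ * (X * pw hX.1 (-1)) = pw hX.1 (-1) := by
      rw [← Matrix.mul_assoc, hXY, Matrix.one_mul]
    have h2 : X * pw hX.1 (-1) = 1 := by
      have := pw_cancel hX.1 1 (-1) (by norm_num)
      rwa [pw_one hX] at this
    rwa [h2, Matrix.mul_one] at this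
  have hVV : Vᴴ * V = 1 := by
    have e : star (1 / 2 : ℂ) = 1 / 2 := by simp
    rw [hV, Matrix.conjTranspose_mul, Matrix.conjTranspose_conjTranspose, pw_star, e]
    calc pw hX.1 (1 / 2) * Y * (Yᴴ * pw hX.1 (1 / 2))
        = pw hX.1 (1 / 2) * (Y * Yᴴ) * pw hX.1 (1 / 2) := by simp only [Matrix.mul_assoc]
      _ = 1 := by rw [hYY, ← pw_add, ← pw_add]; norm_num [pw_zero]
  let G : ℂ → Matrix n n ℂ := fun z => pw hA.1 ((0 : ℝ) + z * (1 / 2 : ℝ)) *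
    pw hC.1 ((0 : ℝ) + z * (-1 / 2 : ℝ)) * pw hB.1 ((0 : ℝ) + z * (1 / 2 : ℝ))
  let F : ℂ → ℂ := fun z => (G z * (V * pw hX.1 ((-1 / s : ℝ) + z * (1 / (2 * s) : ℝ)))).trace
  have hG : GoodM G := ((GoodM.pw _ _ _).mul (GoodM.pw _ _ _)).mul (GoodM.pw _ _ _)
  have hF : Good F := Good.trace (hG.mul ((GoodM.const V).mul (GoodM.pw _ _ _)))
  have hFs : F s = T := by
    have e1 : G s = Y := by
      simp only [G, hY]; congr 3 <;> push_cast <;> ring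
    simp only [F]
    rw [e1, hV, ← htr]
    have : Y * (Yᴴ * pw hX.1 (1 / 2) * pw hX.1 ((-1 / s : ℝ) + s * (1 / (2 * s) : ℝ))) =
      (Y * Yᴴ) * (pw hX.1 (1 / 2) * pw hX.1 ((-1 / s : ℝ) + s * (1 / (2 * s) : ℝ))) := by
      simp only [Matrix.mul_assoc]
    rw [this, hYY, ← pw_add, ← pw_add]
    congr 2
    push_cast
    field_simp
    ring
  have hb0 : ∀ z ∈ Complex.re ⁻¹' {(0 : ℝ)}, ‖F z‖ ≤ T := by
    intro z hz
    have hz' : z.re = 0 := hz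
    have hzs : star z = -z := by
      apply Complex.ext <;> simp [hz']
    have hGG : (G z)ᴴ * G z = 1 := by
      simp only [G, Matrix.conjTranspose_mul, pw_star]
      simp only [Matrix.mul_assoc]
      rw [← Matrix.mul_assoc (pw hA.1 _) (pw hA.1 _), pw_cancel, Matrix.one_mul,
        ← Matrix.mul_assoc (pw hC.1 _) (pw hC.1 _), pw_cancel, Matrix.one_mul, pw_cancel]
      all_goals simp [hzs]
    set c : ℂ := (-1 / s : ℝ) + z * (1 / (2 * s) : ℝ) with hc
    have hcc : star (c / 2) + c / 2 = (-1 / s : ℝ) := by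
      have : star (c / 2) = ((-1 / s : ℝ) + star z * (1 / (2 * s) : ℝ)) / 2 := by
        simp [hc]
      rw [this, hzs, hc]; ring
    have hq : ((pw hX.1 (c / 2))ᴴ * pw hX.1 (c / 2)).trace = (T : ℂ) := by
      rw [pw_star, ← pw_add, hcc, htr]
    have hp : ((G z * (V * pw hX.1 (c / 2)))ᴴ * (G z * (V * pw hX.1 (c / 2)))).trace = (T : ℂ) := by
      have : (G z * (V * pw hX.1 (c / 2)))ᴴ * (G z * (V * pw hX.1 (c / 2))) =
          (pw hX.1 (c / 2))ᴴ * (Vᴴ * ((G z)ᴴ * G z) * V) * pw hX.1 (c / 2) := by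
        simp only [Matrix.conjTranspose_mul, Matrix.mul_assoc]
      rw [this, hGG, Matrix.mul_one, hVV, Matrix.mul_one, hq]
    have : F z = ((G z * (V * pw hX.1 (c / 2))) * pw hX.1 (c / 2)).trace := by
      rw [Matrix.mul_assoc, Matrix.mul_assoc V, ← pw_add, add_halves]
    rw [this]
    refine (hs_cs _ _ T T hp hq).trans ?_
    rw [Real.mul_self_sqrt hT0]
  have hb1 : ∀ z ∈ Complex.re ⁻¹' {(1 : ℝ)}, ‖F z‖ ≤ √T := by
    intro z hz
    have hz' : z.re = 1 := hz
    have hzs : star z = 2 - z := by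
      apply Complex.ext <;> simp [hz']; norm_num
    have hp : ((G z)ᴴ * G z).trace = ((1 : ℝ) : ℂ) := by
      have h1 := H (z / 2) (by
        have : star (z / 2) = star z / 2 := by simp
        rw [this, hzs]; ring)
      rw [Complex.ofReal_one, ← h1]
      have e1 : (G z)ᴴ * G z = pw hB.1 (star z / 2) * (pw hC.1 (-star (z / 2)) *
          (pw hA.1 (star z / 2) * pw hA.1 (z / 2)) * pw hC.1 (-(z / 2)) * pw hB.1 (z / 2)) := by
        have a1 : star ((0 : ℝ) + z * (1 / 2 : ℝ)) = star z / 2 := by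
          simp; ring
        have a2 : star ((0 : ℝ) + z * (-1 / 2 : ℝ)) = -star (z / 2) := by
          simp; ring
        have a3 : (0 : ℝ) + z * (1 / 2 : ℝ) = z / 2 := by
          push_cast; ring
        have a4 : (0 : ℝ) + z * (-1 / 2 : ℝ) = -(z / 2) := by
          push_cast; ring
        simp only [G, Matrix.conjTranspose_mul, pw_star]
        rw [a1, a2, a3, a4]
        simp only [Matrix.mul_assoc]
      rw [e1, ← pw_add, Matrix.trace_mul_comm]
      have e2 : star z / 2 + z / 2 = 1 := by rw [hzs]; ring
      rw [e2, pw_one hA]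
      have e3 : pw hC.1 (-star (z / 2)) * A * pw hC.1 (-(z / 2)) * pw hB.1 (z / 2) *
          pw hB.1 (star z / 2) = pw hC.1 (-star (z / 2)) * (A * pw hC.1 (-(z / 2)) * (pw hB.1 (z / 2) *
          pw hB.1 (star z / 2))) := by simp only [Matrix.mul_assoc]
      rw [e3, ← pw_add, add_comm, e2, pw_one hB, Matrix.trace_mul_comm]
      simp only [Matrix.mul_assoc]
    set c : ℂ := (-1 / s : ℝ) + z * (1 / (2 * s) : ℝ) with hc
    have hcc : star c + c = (-1 / s : ℝ) := by
      have : star c = ((-1 / s : ℝ) + star z * (1 / (2 * s) : ℝ)) := by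
        simp [hc]
      rw [this, hzs, hc]; push_cast; field_simp; ring
    have hq : ((V * pw hX.1 c)ᴴ * (V * pw hX.1 c)).trace = (T : ℂ) := by
      have : (V * pw hX.1 c)ᴴ * (V * pw hX.1 c) = (pw hX.1 c)ᴴ * (Vᴴ * V) * pw hX.1 c := by
        simp only [Matrix.conjTranspose_mul, Matrix.mul_assoc]
      rw [this, hVV, Matrix.mul_one, pw_star, ← pw_add, hcc, htr]
    refine (hs_cs _ _ 1 T hp hq).trans ?_
    simp
  obtain ⟨hd, K, hK⟩ := hF
  have hthree := Complex.HadamardThreeLines.norm_le_interp_of_mem_verticalClosedStrip₀₁' F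
    (z := (s : ℂ)) (a := T) (b := √T) (by
      simp [Complex.HadamardThreeLines.verticalClosedStrip, hs0.le, hs1.le]) hd.diffContOnCl
    (by
      refine ⟨K, ?_⟩
      rintro _ ⟨z, hz, rfl⟩
      exact hK z hz.1 hz.2) hb0 hb1
  rw [hFs, Complex.norm_real, Real.norm_of_nonneg hT0, Complex.ofReal_re] at hthree
  rw [htr]
  suffices T ≤ 1 by exact_mod_cast this
  by_contra hcon
  push Not at hcon
  have hTp : 0 < T := by linarith
  rw [Real.sqrt_eq_rpow, ← Real.rpow_mul hT0, ← Real.rpow_add hTp] at hthree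
  have : T ^ (1 - s + 1 / 2 * s) < T ^ (1 : ℝ) :=
    Real.rpow_lt_rpow_of_exponent_lt hcon (by linarith)
  rw [Real.rpow_one] at this
  linarith

end pwlemmas

open scoped Kronecker in
lemma redBC_eq {dA dB dC : ℕ}
    (ρ : Matrix (Fin dA × Fin dB × Fin dC) (Fin dA × Fin dB × Fin dC) ℂ) :
    redBC ρ = (1 : Matrix (Fin dA) (Fin dA) ℂ) ⊗ₖ
      (∑ m : Fin dA, ρ.submatrix (fun x => (m, x)) (fun x => (m, x))) := by
  ext x y
  simp [redBC, Matrix.kronecker, Matrix.kroneckerMap_apply, Matrix.one_apply, Matrix.sum_apply]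

open scoped Kronecker in
lemma redAC_eq {dA dB dC : ℕ}
    (ρ : Matrix (Fin dA × Fin dB × Fin dC) (Fin dA × Fin dB × Fin dC) ℂ) :
    redAC ρ = ((1 : Matrix (Fin dB) (Fin dB) ℂ) ⊗ₖ
      (∑ m : Fin dB, ρ.submatrix (fun x : Fin dA × Fin dC => (x.1, m, x.2))
        (fun x => (x.1, m, x.2)))).submatrix (fun x => (x.2.1, (x.1, x.2.2)))
        (fun x => (x.2.1, (x.1, x.2.2))) := by
  ext x y
  simp [redAC, Matrix.kronecker, Matrix.kroneckerMap_apply, Matrix.one_apply, Matrix.sum_apply]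

lemma redC_eq {dA dB dC : ℕ}
    (ρ : Matrix (Fin dA × Fin dB × Fin dC) (Fin dA × Fin dB × Fin dC) ℂ) :
    redC ρ = redAC (redBC ρ) := by
  ext x y
  simp only [redC, redAC, redBC]
  have key : ∀ (c : ℂ) (f : Fin dA → Fin dB → ℂ), c * ∑ m, ∑ l, f m l = ∑ l, c * ∑ m, f m l := by
    intro c f
    rw [Finset.sum_comm, Finset.mul_sum]
  rw [mul_comm (if x.1 = y.1 then (1 : ℂ) else 0), mul_assoc]
  exact congrArg _ (key _ (fun m l => ρ (m, l, x.2.2) (m, l, y.2.2)))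

lemma redBC_pd {dA dB dC : ℕ} [Nonempty (Fin dA)]
    {ρ : Matrix (Fin dA × Fin dB × Fin dC) (Fin dA × Fin dB × Fin dC) ℂ} (h : ρ.PosDef) :
    (redBC ρ).PosDef := by
  rw [redBC_eq]
  refine Matrix.PosDef.one.kronecker (Matrix.posDef_sum Finset.univ_nonempty fun m _ => ?_)
  exact h.submatrix (fun x y hxy => by simpa using hxy)

lemma redAC_pd {dA dB dC : ℕ} [Nonempty (Fin dB)]
    {ρ : Matrix (Fin dA × Fin dB × Fin dC) (Fin dA × Fin dB × Fin dC) ℂ} (h : ρ.PosDef) :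
    (redAC ρ).PosDef := by
  rw [redAC_eq]
  refine (Matrix.PosDef.one.kronecker
    (Matrix.posDef_sum Finset.univ_nonempty fun m _ => ?_)).submatrix ?_
  · exact h.submatrix (fun x y hxy => by
      simp only [Prod.mk.injEq, true_and] at hxy; exact Prod.ext hxy.1 hxy.2)
  · intro x y hxy
    simp only [Prod.mk.injEq] at hxy
    exact Prod.ext hxy.2.1 (Prod.ext hxy.1 hxy.2.2)

open scoped Kronecker in
/-- matrix unit on the first factor -/
def PA {n m : Type*} [DecidableEq n] [DecidableEq m] (a a' : n) : Matrix (n × m) (n × m) ℂ :=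
  (Matrix.single a a' (1 : ℂ)) ⊗ₖ (1 : Matrix m m ℂ)

lemma PA_comm {n m : Type*} [Fintype n] [Fintype m] [DecidableEq n] [DecidableEq m]
    (Z : Matrix (n × m) (n × m) ℂ) (z : Matrix m m ℂ)
    (hZ : ∀ x y, Z x y = (if x.1 = y.1 then (1 : ℂ) else 0) * z x.2 y.2) (a a' : n) :
    Z * PA a a' = PA a a' * Z := by
  have : Z = Matrix.kroneckerMap (· * ·) (1 : Matrix n n ℂ) z := by
    ext x y; simp [hZ, Matrix.kroneckerMap_apply, Matrix.one_apply]
  rw [this, PA, ← Matrix.mul_kronecker_mul, ← Matrix.mul_kronecker_mul]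
  simp

lemma PA_form {n m : Type*} [Fintype n] [Fintype m] [DecidableEq n] [DecidableEq m]
    (Z : Matrix (n × m) (n × m) ℂ)
    (hZ : ∀ a a', Z * PA a a' = PA a a' * Z) (a0 a b : n) (x y : m) :
    Z (a, x) (b, y) = (if a = b then (1 : ℂ) else 0) * Z (a0, x) (a0, y) := by
  have h := congrFun (congrFun (hZ b a0) (a, x)) (a0, y)
  simp only [Matrix.mul_apply, PA, Matrix.kroneckerMap_apply, Fintype.sum_prod_type,
    Matrix.single_apply, Matrix.one_apply] at h
  simp [Finset.sum_ite_eq, ite_and] at h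
  rw [h]
  by_cases hab : a = b
  · subst hab; simp
  · simp [hab, Ne.symm hab]

lemma tr_AC {dA dB dC : ℕ} (a0 : Fin dA)
    (ρ Z : Matrix (Fin dA × Fin dB × Fin dC) (Fin dA × Fin dB × Fin dC) ℂ)
    (hZ : ∀ a a', Z * PA a a' = PA a a' * Z) :
    (dA : ℂ) * (redAC ρ * Z).trace = (redC ρ * Z).trace := by
  obtain ⟨z, hf⟩ : ∃ z : (Fin dB × Fin dC) → (Fin dB × Fin dC) → ℂ, ∀ a b x y,
      Z (a, x) (b, y) = (if a = b then (1 : ℂ) else 0) * z x y :=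
    ⟨fun x y => Z (a0, x) (a0, y), PA_form Z hZ a0⟩
  have e1 : (redAC ρ * Z).trace = ∑ b, ∑ c, ∑ c', (∑ a, ∑ m, ρ (a, m, c) (a, m, c')) *
      z (b, c') (b, c) := by
    simp only [Matrix.trace, Matrix.diag, Matrix.mul_apply, Fintype.sum_prod_type, redAC]
    simp only [hf]
    simp only [ite_mul, one_mul, zero_mul, mul_ite, mul_zero, Finset.sum_ite_eq,
      Finset.sum_ite_eq', Finset.mem_univ, if_true, Finset.sum_ite_irrel, Finset.sum_const_zero]
    rw [Finset.sum_comm]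
    refine Finset.sum_congr rfl fun b _ => ?_
    rw [Finset.sum_comm]
    refine Finset.sum_congr rfl fun c _ => ?_
    rw [Finset.sum_comm]
    refine Finset.sum_congr rfl fun c' _ => ?_
    rw [Finset.sum_mul]
  have e2 : (redC ρ * Z).trace = ∑ a : Fin dA, ∑ b, ∑ c, ∑ c',
      (∑ a, ∑ m, ρ (a, m, c) (a, m, c')) * z (b, c') (b, c) := by
    simp only [Matrix.trace, Matrix.diag, Matrix.mul_apply, Fintype.sum_prod_type, redC]
    simp only [hf]
    simp only [ite_mul, one_mul, zero_mul, mul_ite, mul_zero, Finset.sum_ite_eq,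
      Finset.sum_ite_eq', Finset.mem_univ, if_true, Finset.sum_ite_irrel, Finset.sum_const_zero]
  rw [e1, e2]
  simp

lemma tr_BC {dA dB dC : ℕ}
    (ρ : Matrix (Fin dA × Fin dB × Fin dC) (Fin dA × Fin dB × Fin dC) ℂ) :
    (redBC ρ).trace = (dA : ℂ) * ρ.trace := by
  simp only [Matrix.trace, Matrix.diag, redBC, Fintype.sum_prod_type, if_true, one_mul]
  simp only [Finset.sum_const, Finset.card_univ, Fintype.card_fin, nsmul_eq_mul]
  congr 1
  rw [Finset.sum_comm' (t' := Finset.univ) (s' := fun _ => Finset.univ) (by simp)]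
  conv_rhs => rw [Finset.sum_comm]
  rw [Finset.sum_comm]
  refine Finset.sum_congr rfl fun b _ => ?_
  rw [Finset.sum_comm]

theorem stmt_7 {dA dB dC : ℕ}
    (ρ : Matrix (Fin dA × Fin dB × Fin dC) (Fin dA × Fin dB × Fin dC) ℂ)
    (hρ : ρ.PosDef) (hρ1 : ρ.trace = 1)
    (α : ℝ) (hα : α ∈ Set.Ioo (1:ℝ) 2) :
    (mpow (mpow (redAC ρ) ((1 - α)/2) * mpow (redC ρ) ((α - 1)/2) *
        mpow (redBC ρ) (1 - α) * mpow (redC ρ) ((α - 1)/2) * mpow (redAC ρ) ((1 - α)/2)) (1/(1 - α))).trace ≤ 1 := by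
  have hne : Nonempty (Fin dA × Fin dB × Fin dC) := by
    by_contra hcon
    rw [not_nonempty_iff] at hcon
    simp [Matrix.trace] at hρ1
  obtain ⟨a0, b0, c0⟩ := hne
  have : Nonempty (Fin dA) := ⟨a0⟩
  have : Nonempty (Fin dB) := ⟨b0⟩
  have hA : (redAC ρ).PosDef := redAC_pd hρ
  have hB : (redBC ρ).PosDef := redBC_pd hρ
  have hC : (redC ρ).PosDef := by rw [redC_eq]; exact redAC_pd hB
  obtain ⟨hα1, hα2⟩ := hα
  obtain ⟨s, hs⟩ : ∃ s, s = α - 1 := ⟨_, rfl⟩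
  have hs0 : 0 < s := by linarith
  have hs1 : s < 1 := by linarith
  have e1 : (1 - α) / 2 = -s / 2 := by rw [hs]; ring
  have e2 : (α - 1) / 2 = s / 2 := by rw [hs]
  have e3 : 1 - α = -s := by rw [hs]; ring
  rw [e1, e2, e3, pw_mpow hA, pw_mpow hB, pw_mpow hC]
  have hst : ∀ t : ℝ, star (t : ℂ) = t := fun t => Complex.conj_ofReal t
  set Y := pw hA.1 (s / 2 : ℝ) * pw hC.1 (-s / 2 : ℝ) * pw hB.1 (s / 2 : ℝ) with hY
  set Yi := pw hB.1 (-s / 2 : ℝ) * pw hC.1 (s / 2 : ℝ) * pw hA.1 (-s / 2 : ℝ) with hYi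
  have c1 : ((s / 2 : ℝ) : ℂ) + ((-s / 2 : ℝ) : ℂ) = 0 := by push_cast; ring
  have c2 : ((-s / 2 : ℝ) : ℂ) + ((s / 2 : ℝ) : ℂ) = 0 := by push_cast; ring
  have hYYi : Y * Yi = 1 := by
    rw [hY, hYi]
    simp only [Matrix.mul_assoc]
    rw [← Matrix.mul_assoc (pw hB.1 _) (pw hB.1 _), pw_cancel _ _ _ c1, Matrix.one_mul,
      ← Matrix.mul_assoc (pw hC.1 _) (pw hC.1 _), pw_cancel _ _ _ c2, Matrix.one_mul,
      pw_cancel _ _ _ c1]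
  have hXeq : pw hA.1 (-s / 2 : ℝ) * pw hC.1 (s / 2 : ℝ) * pw hB.1 (-s : ℝ) *
      pw hC.1 (s / 2 : ℝ) * pw hA.1 (-s / 2 : ℝ) = Yiᴴ * Yi := by
    have : ((-s : ℝ) : ℂ) = ((-s / 2 : ℝ) : ℂ) + ((-s / 2 : ℝ) : ℂ) := by push_cast; ring
    rw [this, pw_add, hYi]
    simp only [Matrix.conjTranspose_mul, pw_star, hst, Matrix.mul_assoc]
  rw [hXeq]
  have hX : (Yiᴴ * Yi).PosDef := by
    apply Matrix.PosDef.conjTranspose_mul_self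
    intro v w hvw
    have := congrArg (fun u => Y.mulVec u) hvw
    simpa [Matrix.mulVec_mulVec, hYYi] using this
  rw [pw_mpow hX]
  have e4 : 1 / -s = -1 / s := by rw [div_neg, neg_div]
  rw [e4]
  refine main_interp hA hB hC hX s hs0 hs1 hY ?_ ?_
  · have h1 : Yᴴ * Yiᴴ = 1 := by
      have : Yi * Y = 1 := mul_eq_one_comm.1 hYYi
      rw [← Matrix.conjTranspose_mul, this, Matrix.conjTranspose_one]
    calc Y * Yᴴ * (Yiᴴ * Yi) = Y * (Yᴴ * Yiᴴ) * Yi := by simp only [Matrix.mul_assoc]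
      _ = 1 := by rw [h1, Matrix.mul_one, hYYi]
  · intro z hz
    have hdA : (dA : ℂ) ≠ 0 := by
      have := a0.pos
      exact_mod_cast this.ne'
    have hCc : ∀ a a', redC ρ * PA a a' = PA a a' * redC ρ := by
      apply PA_comm _ (fun x y => (if x.1 = y.1 then (1:ℂ) else 0) *
        ∑ m : Fin dA, ∑ l : Fin dB, ρ (m, l, x.2) (m, l, y.2))
      intro x y
      simp only [redC, mul_assoc]
    have hBc : ∀ a a', redBC ρ * PA a a' = PA a a' * redBC ρ := by
      apply PA_comm _ (fun x y => ∑ m : Fin dA, ρ (m, x) (m, y))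
      intro x y
      rfl
    have hZ : ∀ a a', (pw hC.1 (-z) * redBC ρ * pw hC.1 (-star z)) * PA a a' =
        PA a a' * (pw hC.1 (-z) * redBC ρ * pw hC.1 (-star z)) := by
      intro a a'
      have k1 : Commute (pw hC.1 (-z)) (PA a a') := pw_comm hC _ _ (hCc a a')
      have k2 : Commute (pw hC.1 (-star z)) (PA a a') := pw_comm hC _ _ (hCc a a')
      have k3 : Commute (redBC ρ) (PA a a') := hBc a a'
      exact (k1.mul_left k3).mul_left k2
    apply mul_left_cancel₀ hdA
    rw [tr_AC a0 ρ _ hZ, mul_one]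
    have h2 : redC ρ = pw hC.1 (star z) * pw hC.1 z := by
      rw [← pw_add, add_comm, hz, pw_one hC]
    have h3 : redC ρ * (pw hC.1 (-z) * redBC ρ * pw hC.1 (-star z)) =
        pw hC.1 (star z) * (pw hC.1 z * pw hC.1 (-z)) * redBC ρ * pw hC.1 (-star z) := by
      calc redC ρ * (pw hC.1 (-z) * redBC ρ * pw hC.1 (-star z))
          = (pw hC.1 (star z) * pw hC.1 z) * (pw hC.1 (-z) * redBC ρ * pw hC.1 (-star z)) :=
            congrArg (· * (pw hC.1 (-z) * redBC ρ * pw hC.1 (-star z))) h2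
        _ = _ := by simp only [Matrix.mul_assoc]
    rw [h3, pw_cancel _ _ _ (by ring), Matrix.mul_one, Matrix.trace_mul_comm,
      ← Matrix.mul_assoc, pw_cancel _ _ _ (by ring), Matrix.one_mul, tr_BC, hρ1, mul_one]
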